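/- arXiv:1008.0928 — 2 statements merged into one kernel-verified Lean document; each statement's English description precedes it below -/
import Mathlib

section
/- Let μ ∈ ℝ and define p : ℝ × (0,∞) → ℝ by p(x,t) = 2 ∫₀^∞ (exp(−(x−μs)²/(2s))/√(2πs)) · (exp(−s²/(2t))/√(2πt)) ds. Then for every x ≠ 0 and t > 0, p satisfies the fourth-order equation ∂p/∂t = (1/8)∂⁴p/∂x⁴ − (μ/2)∂³p/∂x³ + (μ²/2)∂²p/∂x², i.e. ∂p/∂t = (1/2)((1/2)∂²/∂x² − μ ∂/∂x)² p. -/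
open Real MeasureTheory

/-- Density of the iterated Brownian motion with drift `I^μ(t) = B₁^μ(|B₂(t)|)`. -/
noncomputable def iterBMDriftDensity (μ : ℝ) (x t : ℝ) : ℝ :=
  2 * ∫ s in Set.Ioi (0 : ℝ),
    (Real.exp (-(x - μ * s) ^ 2 / (2 * s)) / Real.sqrt (2 * π * s)) *
      (Real.exp (-s ^ 2 / (2 * t)) / Real.sqrt (2 * π * t))

/-- The operator `L f = (1/2) f'' − μ f'`. -/
noncomputable def driftOp (μ : ℝ) (f : ℝ → ℝ) : ℝ → ℝ :=
  fun y => (1 / 2) * iteratedDeriv 2 f y - μ * deriv f y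

open Filter Set Topology

/-!
Write `L = (1/2) ∂²/∂x² - μ ∂/∂x`, let `q(s, x)` be the density of `B₁^μ(s)` and `g(t, s)` that of
`B₂(t)`, and put `M_a(x, t) = ∫₀^∞ s^a q(s, x) g(t, s) ds`, so that `p = 2 M₀`. From `L q = ∂q/∂s`
and `∂g/∂s = -(s/t) g`, an integration by parts in `s` gives `L M_a = M_{a+1} / t - a M_{a-1}`: for
`x ≠ 0` the density `q(s, x)` vanishes to infinite order at `s = 0`, so every real exponent `a` is
allowed and there are no boundary terms. Applying this twice gives `L² M₀ = M₂ / t² - M₀ / t`, which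
is `2 ∂M₀/∂t` because `∂g/∂t = (1/2) (s²/t² - 1/t) g`.
-/

section DriftOperator

theorem driftOp_congr (μ : ℝ) {f g : ℝ → ℝ} {x : ℝ} (h : f =ᶠ[𝓝 x] g) :
    driftOp μ f x = driftOp μ g x := by
  simp only [driftOp, h.iteratedDeriv_eq, h.deriv_eq]

theorem driftOp_const_mul (μ c : ℝ) (f : ℝ → ℝ) :
    driftOp μ (fun y => c * f y) = fun y => c * driftOp μ f y := by
  ext y
  simp only [driftOp, iteratedDeriv_const_mul_field, deriv_const_mul_field]
  ring

theorem driftOp_eq_of_hasDerivAt (μ : ℝ) {f f' : ℝ → ℝ} {f'' x : ℝ}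
    (hf : ∀ᶠ y in 𝓝 x, HasDerivAt f (f' y) y) (hf' : HasDerivAt f' f'' x) :
    driftOp μ f x = 1 / 2 * f'' - μ * f' x := by
  have h : deriv f =ᶠ[𝓝 x] f' := hf.mono fun y hy => hy.deriv
  rw [driftOp, iteratedDeriv_succ, iteratedDeriv_one, h.deriv_eq, hf'.deriv, h.self_of_nhds]

theorem driftOp_driftOp (μ : ℝ) {f : ℝ → ℝ} {s : Set ℝ} {x : ℝ} (hs : IsOpen s) (hx : x ∈ s)
    (hf : ContDiffOn ℝ 4 f s) :
    driftOp μ (driftOp μ f) x =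
      1 / 4 * iteratedDeriv 4 f x - μ * iteratedDeriv 3 f x + μ ^ 2 * iteratedDeriv 2 f x := by
  have hasDeriv (k : ℕ) (hk : k < 4) (y : ℝ) (hy : y ∈ s) :
      HasDerivAt (iteratedDeriv k f) (iteratedDeriv (k + 1) f y) y := by
    have hdiff := hf.differentiableOn_iteratedDerivWithin (m := k) (mod_cast hk) hs.uniqueDiffOn
    rw [iteratedDeriv_succ]
    exact ((hdiff.congr fun z hz => (iteratedDerivWithin_of_isOpen hs hz).symm).differentiableAt
      (hs.mem_nhds hy)).hasDerivAt
  have hL (y : ℝ) (hy : y ∈ s) : HasDerivAt (driftOp μ f)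
      (1 / 2 * iteratedDeriv 3 f y - μ * iteratedDeriv 2 f y) y := by
    have hdef : driftOp μ f = fun y => 1 / 2 * iteratedDeriv 2 f y - μ * iteratedDeriv 1 f y :=
      funext fun z => by rw [driftOp, iteratedDeriv_one]
    exact hdef ▸ ((hasDeriv 2 (by simp) y hy).const_mul (1 / 2)).sub
      ((hasDeriv 1 (by simp) y hy).const_mul μ)
  rw [driftOp_eq_of_hasDerivAt μ (eventually_of_mem (hs.mem_nhds hx) hL)
    (((hasDeriv 3 (by simp) x hx).const_mul (1 / 2)).sub ((hasDeriv 2 (by simp) x hx).const_mul μ))]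
  ring

end DriftOperator

theorem integral_Ioi_eq_zero_of_hasDerivAt {f f' : ℝ → ℝ} {a : ℝ}
    (hderiv : ∀ s ∈ Ioi a, HasDerivAt f (f' s) s) (hf' : IntegrableOn f' (Ioi a))
    (hf : IntegrableOn f (Ioi a)) (hlim : Tendsto f (𝓝[>] a) (𝓝 0)) :
    ∫ s in Ioi a, f' s = 0 := by
  have htop := tendsto_zero_of_hasDerivAt_of_integrableOn_Ioi hderiv hf' hf
  simpa [Pi.mul_def] using integral_Ioi_deriv_mul_eq_sub (v := fun _ => 1) (a' := 0) (b' := 0)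
    hderiv (fun s _ => hasDerivAt_const s 1) (by simpa [Pi.mul_def, Pi.add_def] using hf')
    (by simpa [Pi.mul_def] using hlim) (by simpa [Pi.mul_def] using htop)

section WeightedGaussian

variable {b c : ℝ}

theorem integrableOn_rpow_mul_exp_neg_div_mul_exp_neg_mul_sq (a : ℝ) (hc : 0 < c) (hb : 0 < b) :
    IntegrableOn (fun s : ℝ => s ^ a * exp (-c / s) * exp (-b * s ^ 2)) (Ioi 0) := by
  obtain ⟨m, hm⟩ := exists_nat_gt (-1 - a)
  have hdom := (integrableOn_rpow_mul_exp_neg_mul_sq hb (s := a + m) (by linarith)).const_mul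
    (m.factorial / c ^ m)
  refine hdom.mono' (by fun_prop) ((ae_restrict_iff' measurableSet_Ioi).2 (ae_of_all _ ?_))
  intro s (hs : 0 < s)
  have hexp : exp (-c / s) ≤ m.factorial / c ^ m * s ^ m := by
    rw [neg_div, exp_neg, inv_le_comm₀ (exp_pos _) (by positivity)]
    refine le_of_eq_of_le ?_ (pow_div_factorial_le_exp (c / s) (by positivity) m)
    rw [div_pow]
    field_simp
  rw [norm_of_nonneg (by positivity), rpow_add hs, rpow_natCast]
  calc s ^ a * exp (-c / s) * exp (-b * s ^ 2)
      ≤ s ^ a * (m.factorial / c ^ m * s ^ m) * exp (-b * s ^ 2) := by gcongr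
    _ = m.factorial / c ^ m * (s ^ a * s ^ m * exp (-b * s ^ 2)) := by ring

theorem tendsto_rpow_mul_exp_neg_div_nhdsGT_zero (a : ℝ) (hc : 0 < c) :
    Tendsto (fun s : ℝ => s ^ a * exp (-c / s)) (𝓝[>] 0) (𝓝 0) := by
  refine ((tendsto_rpow_mul_exp_neg_mul_atTop_nhds_zero (-a) c hc).comp
    tendsto_inv_nhdsGT_zero).congr' ?_
  filter_upwards [self_mem_nhdsWithin] with s (hs : 0 < s)
  rw [Function.comp_apply, inv_rpow hs.le, rpow_neg hs.le, inv_inv, div_eq_mul_inv]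

theorem tendsto_rpow_mul_exp_neg_div_mul_exp_neg_mul_sq_nhdsGT_zero (a b : ℝ) (hc : 0 < c) :
    Tendsto (fun s : ℝ => s ^ a * exp (-c / s) * exp (-b * s ^ 2)) (𝓝[>] 0) (𝓝 0) := by
  have hexp : Tendsto (fun s : ℝ => exp (-b * s ^ 2)) (𝓝[>] 0) (𝓝 1) := by
    have : Continuous fun s : ℝ => exp (-b * s ^ 2) := by fun_prop
    simpa using (this.tendsto 0).mono_left nhdsWithin_le_nhds
  simpa using (tendsto_rpow_mul_exp_neg_div_nhdsGT_zero a hc).mul hexp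

end WeightedGaussian

/-- The density at `x` of Brownian motion with drift `μ` at time `t`. For `μ = 0` it is the
heat kernel, the density of `B₂(t)`. -/
noncomputable def driftHeatKernel (μ t x : ℝ) : ℝ :=
  exp (-(x - μ * t) ^ 2 / (2 * t)) / √(2 * π * t)

section DriftHeatKernel

variable {t : ℝ}

theorem driftHeatKernel_nonneg (μ t x : ℝ) : 0 ≤ driftHeatKernel μ t x := by
  unfold driftHeatKernel
  positivity

theorem hasDerivAt_driftHeatKernel_space (μ : ℝ) (ht : 0 < t) (x : ℝ) :
    HasDerivAt (driftHeatKernel μ t) ((μ - x / t) * driftHeatKernel μ t x) x := by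
  have hexponent : HasDerivAt (fun y => -(y - μ * t) ^ 2 / (2 * t)) (μ - x / t) x := by
    refine ((((hasDerivAt_id' x).sub_const (μ * t)).fun_pow 2).fun_neg.div_const
      (2 * t)).congr_deriv ?_
    field_simp
    ring
  refine (hexponent.exp.div_const √(2 * π * t)).congr_deriv ?_
  rw [driftHeatKernel]
  ring

theorem hasDerivAt_driftHeatKernel_time (μ : ℝ) (ht : 0 < t) (x : ℝ) :
    HasDerivAt (fun s => driftHeatKernel μ s x)
      ((x ^ 2 / t ^ 2 - 1 / t - μ ^ 2) / 2 * driftHeatKernel μ t x) t := by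
  have hexponent : HasDerivAt (fun s => -(x - μ * s) ^ 2 / (2 * s))
      ((x ^ 2 / t ^ 2 - μ ^ 2) / 2) t := by
    refine (((((hasDerivAt_id' t).const_mul μ).const_sub x).fun_pow 2).fun_neg.fun_div
      ((hasDerivAt_id' t).const_mul 2) (by positivity)).congr_deriv ?_
    field_simp
    ring
  have hnormalizer : HasDerivAt (fun s => √(2 * π * s)) (√(2 * π * t) / (2 * t)) t := by
    refine (((hasDerivAt_id' t).const_mul (2 * π)).sqrt (by positivity)).congr_deriv ?_
    have hsq : √(2 * π * t) ^ 2 = 2 * π * t := sq_sqrt (by positivity)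
    field_simp
    linear_combination -hsq
  refine (hexponent.exp.fun_div hnormalizer (by positivity)).congr_deriv ?_
  rw [driftHeatKernel]
  field_simp
  ring

theorem driftHeatKernel_le (μ : ℝ) (ht : 0 < t) (x : ℝ) :
    driftHeatKernel μ t x ≤ exp (μ * x) * exp (-(x ^ 2 / 2) / t) / √t := by
  have hsqrt : √t ≤ √(2 * π * t) := sqrt_le_sqrt (by nlinarith [pi_gt_three])
  rw [driftHeatKernel, ← exp_add]
  gcongr
  have : -(x - μ * t) ^ 2 / (2 * t) = μ * x + -(x ^ 2 / 2) / t - μ ^ 2 * t / 2 := by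
    field_simp
    ring
  have : 0 ≤ μ ^ 2 * t / 2 := by positivity
  linarith

end DriftHeatKernel

/-- The weight `s ^ a` times the joint density at `(x, s)` of `B₁^μ(s)` and `B₂(t)`, so that
`a = 0` gives half the integrand of `iterBMDriftDensity`. -/
noncomputable def iterBMKernel (μ a x t s : ℝ) : ℝ :=
  s ^ a * (driftHeatKernel μ s x * driftHeatKernel 0 t s)

/-- Half the `a`-th moment of the clock `|B₂(t)|` on the event `I^μ(t) = x`, where negative
`a` are allowed. The factor `2` of the density of `|B₂(t)|` is left out. -/
noncomputable def iterBMMoment (μ a x t : ℝ) : ℝ :=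
  ∫ s in Ioi 0, iterBMKernel μ a x t s

theorem iterBMDriftDensity_eq (μ x t : ℝ) :
    iterBMDriftDensity μ x t = 2 * iterBMMoment μ 0 x t := by
  simp [iterBMDriftDensity, iterBMMoment, iterBMKernel, driftHeatKernel]

section Kernel

variable {s t x : ℝ}

theorem iterBMKernel_add_one (μ a x t : ℝ) (hs : 0 < s) :
    iterBMKernel μ (a + 1) x t s = s * iterBMKernel μ a x t s := by
  rw [iterBMKernel, iterBMKernel, rpow_add_one hs.ne']
  ring

theorem iterBMKernel_sub_one (μ a x t : ℝ) (hs : 0 < s) :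
    iterBMKernel μ (a - 1) x t s = iterBMKernel μ a x t s / s := by
  rw [iterBMKernel, iterBMKernel, rpow_sub_one hs.ne']
  ring

theorem measurable_iterBMKernel (μ a x t : ℝ) : Measurable (iterBMKernel μ a x t) := by
  unfold iterBMKernel driftHeatKernel
  fun_prop

theorem hasDerivAt_iterBMKernel_space (μ a t x : ℝ) (hs : 0 < s) :
    HasDerivAt (fun y => iterBMKernel μ a y t s)
      (μ * iterBMKernel μ a x t s - x * iterBMKernel μ (a - 1) x t s) x := by
  refine (((hasDerivAt_driftHeatKernel_space μ hs x).mul_const _).const_mul _).congr_deriv ?_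
  rw [iterBMKernel_sub_one μ a x t hs, iterBMKernel]
  ring

theorem hasDerivAt_iterBMKernel_time (μ a x : ℝ) (ht : 0 < t) (hs : 0 < s) :
    HasDerivAt (fun τ => iterBMKernel μ a x τ s)
      (1 / (2 * t ^ 2) * iterBMKernel μ (a + 2) x t s - 1 / (2 * t) * iterBMKernel μ a x t s)
      t := by
  refine (((hasDerivAt_driftHeatKernel_time 0 ht s).const_mul _).const_mul _).congr_deriv ?_
  rw [show a + 2 = a + 1 + 1 by ring, iterBMKernel_add_one μ _ x t hs,
    iterBMKernel_add_one μ a x t hs, iterBMKernel]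
  ring

theorem hasDerivAt_iterBMKernel_clock (μ a x : ℝ) (ht : 0 < t) (hs : 0 < s) :
    HasDerivAt (iterBMKernel μ a x t)
      (x ^ 2 / 2 * iterBMKernel μ (a - 2) x t s + (a - 1 / 2) * iterBMKernel μ (a - 1) x t s -
        μ ^ 2 / 2 * iterBMKernel μ a x t s - 1 / t * iterBMKernel μ (a + 1) x t s) s := by
  refine ((hasDerivAt_rpow_const (Or.inl hs.ne')).mul
    ((hasDerivAt_driftHeatKernel_time μ hs x).mul
      (hasDerivAt_driftHeatKernel_space 0 ht s))).congr_deriv ?_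
  rw [show a - 2 = a - 1 - 1 by ring, iterBMKernel_sub_one μ (a - 1) x t hs,
    iterBMKernel_sub_one μ a x t hs, iterBMKernel_add_one μ a x t hs, rpow_sub_one hs.ne']
  simp only [iterBMKernel, Pi.mul_apply]
  ring

theorem iterBMKernel_nonneg (μ a x t : ℝ) (hs : 0 < s) : 0 ≤ iterBMKernel μ a x t s :=
  mul_nonneg (rpow_nonneg hs.le a)
    (mul_nonneg (driftHeatKernel_nonneg μ s x) (driftHeatKernel_nonneg 0 t s))

theorem iterBMKernel_le (μ a : ℝ) {r t₀ T : ℝ} (hx : r ^ 2 ≤ x ^ 2) (ht₀ : 0 < t₀) (ht : t₀ ≤ t)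
    (hT : t ≤ T) (hs : 0 < s) :
    iterBMKernel μ a x t s ≤ exp (μ * x) / √t₀ *
      (s ^ (a - 1 / 2) * exp (-(r ^ 2 / 2) / s) * exp (-(1 / (2 * T)) * s ^ 2)) := by
  have htpos : 0 < t := ht₀.trans_le ht
  have hspace : driftHeatKernel μ s x ≤ exp (μ * x) * exp (-(r ^ 2 / 2) / s) / √s :=
    (driftHeatKernel_le μ hs x).trans (by gcongr)
  have hclock : driftHeatKernel 0 t s ≤ exp (-(s ^ 2 / 2) / T) / √t₀ := by
    refine (driftHeatKernel_le 0 htpos s).trans ?_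
    rw [zero_mul, exp_zero, one_mul, neg_div, neg_div]
    gcongr
  calc iterBMKernel μ a x t s
      ≤ s ^ a * (exp (μ * x) * exp (-(r ^ 2 / 2) / s) / √s *
          (exp (-(s ^ 2 / 2) / T) / √t₀)) := by
        unfold iterBMKernel
        gcongr
        exact driftHeatKernel_nonneg 0 t s
    _ = _ := by
        rw [rpow_sub hs, ← sqrt_eq_rpow,
          show -(1 / (2 * T)) * s ^ 2 = -(s ^ 2 / 2) / T by ring]
        ring

theorem exists_bound_iterBMKernel (μ a : ℝ) (hx : x ≠ 0) (ht : 0 < t) :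
    ∃ bound : ℝ → ℝ, IntegrableOn bound (Ioi 0) ∧ Tendsto bound (𝓝[>] 0) (𝓝 0) ∧
      ∀ᶠ z : ℝ × ℝ in 𝓝 (x, t), ∀ s > 0, ‖iterBMKernel μ a z.1 z.2 s‖ ≤ bound s := by
  have hc : 0 < (x / 2) ^ 2 / 2 := by positivity
  have hb : 0 < 1 / (2 * (2 * t)) := by positivity
  refine ⟨fun s => exp (μ * x + 1) / √(t / 2) *
      (s ^ (a - 1 / 2) * exp (-((x / 2) ^ 2 / 2) / s) * exp (-(1 / (2 * (2 * t))) * s ^ 2)),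
    (integrableOn_rpow_mul_exp_neg_div_mul_exp_neg_mul_sq (a - 1 / 2) hc hb).const_mul _, ?_, ?_⟩
  · simpa using (tendsto_rpow_mul_exp_neg_div_mul_exp_neg_mul_sq_nhdsGT_zero (a - 1 / 2) _
      hc).const_mul _
  have hsq : ∀ᶠ y in 𝓝 x, (x / 2) ^ 2 < y ^ 2 :=
    (continuous_pow 2).continuousAt.eventually_const_lt (by nlinarith [sq_pos_of_ne_zero hx])
  have hexp : ∀ᶠ y in 𝓝 x, μ * y < μ * x + 1 :=
    (continuous_const_mul μ).continuousAt.eventually_lt_const (by linarith)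
  have htime : ∀ᶠ τ in 𝓝 t, τ ∈ Ioo (t / 2) (2 * t) :=
    Ioo_mem_nhds (by linarith) (by linarith)
  filter_upwards [(hsq.and hexp).prod_nhds htime] with ⟨y, τ⟩ ⟨⟨hy, hμy⟩, hτ₁, hτ₂⟩ s hs
  rw [norm_of_nonneg (iterBMKernel_nonneg μ a y τ hs)]
  refine (iterBMKernel_le μ a hy.le (half_pos ht) hτ₁.le hτ₂.le hs).trans ?_
  gcongr

theorem integrableOn_iterBMKernel (μ a : ℝ) (hx : x ≠ 0) (ht : 0 < t) :
    IntegrableOn (iterBMKernel μ a x t) (Ioi 0) := by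
  obtain ⟨bound, hint, -, hbound⟩ := exists_bound_iterBMKernel μ a hx ht
  exact hint.mono' (measurable_iterBMKernel μ a x t).aestronglyMeasurable
    ((ae_restrict_iff' measurableSet_Ioi).2 (ae_of_all _ hbound.self_of_nhds))

theorem tendsto_iterBMKernel_nhdsGT_zero (μ a : ℝ) (hx : x ≠ 0) (ht : 0 < t) :
    Tendsto (iterBMKernel μ a x t) (𝓝[>] 0) (𝓝 0) := by
  obtain ⟨bound, -, hlim, hbound⟩ := exists_bound_iterBMKernel μ a hx ht
  exact squeeze_zero_norm' (eventually_of_mem self_mem_nhdsWithin hbound.self_of_nhds) hlim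

end Kernel

section Moment

variable {t x : ℝ}

theorem hasDerivAt_iterBMMoment_space (μ a : ℝ) (hx : x ≠ 0) (ht : 0 < t) :
    HasDerivAt (fun y => iterBMMoment μ a y t)
      (μ * iterBMMoment μ a x t - x * iterBMMoment μ (a - 1) x t) x := by
  obtain ⟨bound₀, hint₀, -, hbound₀⟩ := exists_bound_iterBMKernel μ a hx ht
  obtain ⟨bound₁, hint₁, -, hbound₁⟩ := exists_bound_iterBMKernel μ (a - 1) hx ht
  have hmem : ∀ᶠ y in 𝓝 x, |y| < |x| + 1 ∧
      (∀ s > 0, ‖iterBMKernel μ a y t s‖ ≤ bound₀ s) ∧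
      ∀ s > 0, ‖iterBMKernel μ (a - 1) y t s‖ ≤ bound₁ s :=
    (continuous_abs.continuousAt.eventually_lt_const (lt_add_one |x|)).and
      ((hbound₀.and hbound₁).curry_nhds.mono fun y hy => hy.self_of_nhds)
  have h := (hasDerivAt_integral_of_dominated_loc_of_deriv_le (μ := volume.restrict (Ioi 0))
    (F := fun y s => iterBMKernel μ a y t s)
    (F' := fun y s => μ * iterBMKernel μ a y t s - y * iterBMKernel μ (a - 1) y t s)
    (bound := fun s => |μ| * bound₀ s + (|x| + 1) * bound₁ s) hmem
    (Eventually.of_forall fun y => (measurable_iterBMKernel μ a y t).aestronglyMeasurable)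
    (integrableOn_iterBMKernel μ a hx ht)
    (((measurable_iterBMKernel μ a x t).const_mul μ).sub
      ((measurable_iterBMKernel μ (a - 1) x t).const_mul x)).aestronglyMeasurable
    ((ae_restrict_iff' measurableSet_Ioi).2 (ae_of_all _ ?_))
    ((hint₀.const_mul |μ|).add (hint₁.const_mul (|x| + 1)))
    ((ae_restrict_iff' measurableSet_Ioi).2
      (ae_of_all _ fun s hs y _ => hasDerivAt_iterBMKernel_space μ a t y hs))).2
  · rwa [integral_sub ((integrableOn_iterBMKernel μ a hx ht).const_mul μ)
      ((integrableOn_iterBMKernel μ (a - 1) hx ht).const_mul x), integral_const_mul,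
      integral_const_mul] at h
  · rintro s hs y ⟨hy, hy₀, hy₁⟩
    refine (norm_sub_le _ _).trans ?_
    rw [norm_mul, norm_mul, norm_eq_abs μ, norm_eq_abs y]
    gcongr
    exacts [hy₀ s hs, hy₁ s hs]

theorem hasDerivAt_iterBMMoment_time (μ a : ℝ) (hx : x ≠ 0) (ht : 0 < t) :
    HasDerivAt (fun τ => iterBMMoment μ a x τ)
      (1 / (2 * t ^ 2) * iterBMMoment μ (a + 2) x t - 1 / (2 * t) * iterBMMoment μ a x t) t := by
  obtain ⟨bound₀, hint₀, -, hbound₀⟩ := exists_bound_iterBMKernel μ a hx ht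
  obtain ⟨bound₂, hint₂, -, hbound₂⟩ := exists_bound_iterBMKernel μ (a + 2) hx ht
  have hmem : ∀ᶠ τ in 𝓝 t, t / 2 < τ ∧
      (∀ s > 0, ‖iterBMKernel μ a x τ s‖ ≤ bound₀ s) ∧
      ∀ s > 0, ‖iterBMKernel μ (a + 2) x τ s‖ ≤ bound₂ s :=
    (eventually_gt_nhds (half_lt_self ht)).and (hbound₀.and hbound₂).curry_nhds.self_of_nhds
  have h := (hasDerivAt_integral_of_dominated_loc_of_deriv_le (μ := volume.restrict (Ioi 0))
    (F := fun τ s => iterBMKernel μ a x τ s)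
    (F' := fun τ s =>
      1 / (2 * τ ^ 2) * iterBMKernel μ (a + 2) x τ s - 1 / (2 * τ) * iterBMKernel μ a x τ s)
    (bound := fun s => 1 / (2 * (t / 2) ^ 2) * bound₂ s + 1 / (2 * (t / 2)) * bound₀ s) hmem
    (Eventually.of_forall fun τ => (measurable_iterBMKernel μ a x τ).aestronglyMeasurable)
    (integrableOn_iterBMKernel μ a hx ht)
    (((measurable_iterBMKernel μ (a + 2) x t).const_mul _).sub
      ((measurable_iterBMKernel μ a x t).const_mul _)).aestronglyMeasurable
    ((ae_restrict_iff' measurableSet_Ioi).2 (ae_of_all _ ?_))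
    ((hint₂.const_mul _).add (hint₀.const_mul _))
    ((ae_restrict_iff' measurableSet_Ioi).2 (ae_of_all _ fun s hs τ hτ =>
      hasDerivAt_iterBMKernel_time μ a x ((half_pos ht).trans hτ.1) hs))).2
  · rwa [integral_sub ((integrableOn_iterBMKernel μ (a + 2) hx ht).const_mul _)
      ((integrableOn_iterBMKernel μ a hx ht).const_mul _), integral_const_mul,
      integral_const_mul] at h
  · rintro s hs τ ⟨hτ, hτ₀, hτ₂⟩
    have hτ_pos : 0 < τ := (half_pos ht).trans hτ
    refine (norm_sub_le _ _).trans ?_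
    rw [norm_mul, norm_mul, norm_of_nonneg (by positivity : 0 ≤ 1 / (2 * τ ^ 2)),
      norm_of_nonneg (by positivity : 0 ≤ 1 / (2 * τ))]
    gcongr
    exacts [hτ₂ s hs, hτ₀ s hs]

theorem contDiffOn_iterBMMoment (μ a : ℝ) (ht : 0 < t) (n : ℕ) :
    ContDiffOn ℝ n (fun y => iterBMMoment μ a y t) {0}ᶜ := by
  induction n generalizing a with
  | zero => exact contDiffOn_zero.2 fun y hy =>
      (hasDerivAt_iterBMMoment_space μ a hy ht).continuousAt.continuousWithinAt
  | succ n ih =>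
    have hderiv : EqOn (deriv fun y => iterBMMoment μ a y t)
        (fun y => μ * iterBMMoment μ a y t - y * iterBMMoment μ (a - 1) y t) {0}ᶜ :=
      fun y hy => (hasDerivAt_iterBMMoment_space μ a hy ht).deriv
    rw [Nat.cast_succ, contDiffOn_succ_iff_deriv_of_isOpen isOpen_compl_singleton]
    refine ⟨fun y hy =>
      (hasDerivAt_iterBMMoment_space μ a hy ht).differentiableAt.differentiableWithinAt,
      by simp, ?_⟩
    exact ((contDiffOn_const.mul (ih a)).sub (contDiffOn_id.mul (ih (a - 1)))).congr hderiv

theorem iterBMMoment_recurrence (μ a : ℝ) (hx : x ≠ 0) (ht : 0 < t) :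
    x ^ 2 / 2 * iterBMMoment μ (a - 2) x t + (a - 1 / 2) * iterBMMoment μ (a - 1) x t -
      μ ^ 2 / 2 * iterBMMoment μ a x t - 1 / t * iterBMMoment μ (a + 1) x t = 0 := by
  have hint (b c : ℝ) : IntegrableOn (fun s => c * iterBMKernel μ b x t s) (Ioi 0) :=
    (integrableOn_iterBMKernel μ b hx ht).const_mul c
  have hint₂ := (hint (a - 2) (x ^ 2 / 2)).fun_add (hint (a - 1) (a - 1 / 2))
  have hint₃ := hint₂.fun_sub (hint a (μ ^ 2 / 2))
  have hzero := integral_Ioi_eq_zero_of_hasDerivAt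
    (fun s hs => hasDerivAt_iterBMKernel_clock μ a x ht hs) (hint₃.fun_sub (hint (a + 1) (1 / t)))
    (integrableOn_iterBMKernel μ a hx ht) (tendsto_iterBMKernel_nhdsGT_zero μ a hx ht)
  rwa [integral_sub hint₃ (hint _ _), integral_sub hint₂ (hint _ _),
    integral_add (hint _ _) (hint _ _), integral_const_mul, integral_const_mul,
    integral_const_mul, integral_const_mul] at hzero

theorem driftOp_iterBMMoment (μ a : ℝ) (hx : x ≠ 0) (ht : 0 < t) :
    driftOp μ (fun y => iterBMMoment μ a y t) x =
      1 / t * iterBMMoment μ (a + 1) x t - a * iterBMMoment μ (a - 1) x t := by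
  have hfirst : ∀ᶠ y in 𝓝 x, HasDerivAt (fun y => iterBMMoment μ a y t)
      (μ * iterBMMoment μ a y t - y * iterBMMoment μ (a - 1) y t) y :=
    (eventually_ne_nhds hx).mono fun y hy => hasDerivAt_iterBMMoment_space μ a hy ht
  have hsecond := ((hasDerivAt_iterBMMoment_space μ a hx ht).const_mul μ).sub
    ((hasDerivAt_id x).mul (hasDerivAt_iterBMMoment_space μ (a - 1) hx ht))
  rw [driftOp_eq_of_hasDerivAt μ hfirst hsecond, id_eq, show a - 1 - 1 = a - 2 by ring]
  linear_combination iterBMMoment_recurrence μ a hx ht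

theorem driftOp_driftOp_iterBMMoment_zero (μ : ℝ) (hx : x ≠ 0) (ht : 0 < t) :
    driftOp μ (driftOp μ fun y => iterBMMoment μ 0 y t) x =
      1 / t ^ 2 * iterBMMoment μ 2 x t - 1 / t * iterBMMoment μ 0 x t := by
  have honce : driftOp μ (fun y => iterBMMoment μ 0 y t) =ᶠ[𝓝 x]
      fun y => 1 / t * iterBMMoment μ 1 y t :=
    (eventually_ne_nhds hx).mono fun y hy => by simpa using driftOp_iterBMMoment μ 0 hy ht
  rw [driftOp_congr μ honce, driftOp_const_mul]
  beta_reduce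
  rw [driftOp_iterBMMoment μ 1 hx ht, one_add_one_eq_two, sub_self]
  ring

end Moment

/-- For `x ≠ 0`, `t > 0`, the density of the iterated Brownian motion with drift satisfies
`∂p/∂t = (1/8)∂⁴p/∂x⁴ − (μ/2)∂³p/∂x³ + (μ²/2)∂²p/∂x²`, that is,
`∂p/∂t = (1/2)((1/2)∂²/∂x² − μ ∂/∂x)² p`. -/
theorem iterBMDriftDensity_fourth_order_pde (μ : ℝ) :
    ∀ x t : ℝ, x ≠ 0 → 0 < t →
      deriv (fun τ => iterBMDriftDensity μ x τ) t
          = (1 / 8) * iteratedDeriv 4 (fun y => iterBMDriftDensity μ y t) x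
            - (μ / 2) * iteratedDeriv 3 (fun y => iterBMDriftDensity μ y t) x
            + (μ ^ 2 / 2) * iteratedDeriv 2 (fun y => iterBMDriftDensity μ y t) x
        ∧ deriv (fun τ => iterBMDriftDensity μ x τ) t
          = (1 / 2) * driftOp μ (driftOp μ (fun y => iterBMDriftDensity μ y t)) x := by
  intro x t hx ht
  have hspace : (fun y => iterBMDriftDensity μ y t) = fun y => 2 * iterBMMoment μ 0 y t :=
    funext fun y => iterBMDriftDensity_eq μ y t
  have htime : HasDerivAt (fun τ => iterBMDriftDensity μ x τ)
      (2 * (1 / (2 * t ^ 2) * iterBMMoment μ 2 x t - 1 / (2 * t) * iterBMMoment μ 0 x t)) t := by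
    simpa only [iterBMDriftDensity_eq, zero_add] using
      (hasDerivAt_iterBMMoment_time μ 0 hx ht).const_mul 2
  have hsmooth : ContDiffOn ℝ 4 (fun y => iterBMDriftDensity μ y t) {0}ᶜ :=
    hspace ▸ contDiffOn_const.mul (contDiffOn_iterBMMoment μ 0 ht 4)
  have hoperator : deriv (fun τ => iterBMDriftDensity μ x τ) t =
      1 / 2 * driftOp μ (driftOp μ fun y => iterBMDriftDensity μ y t) x := by
    rw [htime.deriv, hspace, driftOp_const_mul, driftOp_const_mul]
    beta_reduce
    rw [driftOp_driftOp_iterBMMoment_zero μ hx ht]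
    ring
  refine ⟨?_, hoperator⟩
  rw [hoperator, driftOp_driftOp μ isOpen_compl_singleton hx hsmooth]
  ring
end

section
/- Let μ ∈ ℝ and define p : ℝ × (0,∞) → ℝ by p(x,t) = 2 ∫₀^∞ (exp(−(x−μs)²/(2s))/√(2πs)) · (exp(−s²/(2t))/√(2πt)) ds. Then for every η > 0 and β ∈ ℝ, the joint Laplace–Fourier transform satisfies ∫₀^∞ e^{−ηt} ∫_{−∞}^{+∞} e^{iβx} p(x,t) dx dt = η^{−1/2} / ( β²/2^{3/2} − iβμ/√2 + √η ). -/
open Real MeasureTheory Complex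

/-!
Conditionally on `|B₂(t)| = s`, the law of `I^μ(t)` is Gaussian with mean `μ s` and variance `s`, so
the Fourier transform in `x` replaces the first Gaussian factor of the density by `exp (-z s)` with
`z = β ^ 2 / 2 - I β μ`. The Laplace transform in `t` then turns the heat kernel into the resolvent
kernel `exp (-√(2 η) |s|) / √(2 η)` of Brownian motion, and an exponential integral in `s` remains.

The resolvent kernel comes from the Cauchy–Schlömilch substitution `y = a u - b / u`, which carries
`(0, ∞)` onto `ℝ` and reduces `∫ exp (-(p u ^ 2 + q / u ^ 2))` to a Gaussian integral on completing
the square.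
-/

open Set Function ProbabilityTheory
open scoped NNReal

section CauchySchlomilch

variable {E : Type*} [NormedAddCommGroup E] [NormedSpace ℝ E] {a b c : ℝ}

lemma hasDerivAt_const_div {u : ℝ} (hu : u ≠ 0) :
    HasDerivAt (fun u ↦ c / u) (-(c / u ^ 2)) u := by
  simpa [div_eq_mul_inv] using (hasDerivAt_inv hu).const_mul c

lemma antitoneOn_const_div_Ioi (hc : 0 ≤ c) : AntitoneOn (fun u ↦ c / u) (Ioi 0) :=
  fun _ hu _ _ huv ↦ div_le_div_of_nonneg_left hc hu huv

lemma image_const_div_Ioi (hc : 0 < c) : (fun u ↦ c / u) '' Ioi 0 = Ioi 0 := by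
  refine Subset.antisymm (image_subset_iff.2 fun u hu ↦ div_pos hc hu) fun v hv ↦ ?_
  exact ⟨c / v, div_pos hc hv, div_div_cancel₀ hc.ne'⟩

lemma integral_Ioi_comp_const_div (hc : 0 < c) (g : ℝ → E) :
    ∫ u in Ioi 0, (c / u ^ 2) • g (c / u) = ∫ u in Ioi 0, g u := by
  have h := integral_image_eq_integral_deriv_smul_of_antitoneOn measurableSet_Ioi
    (fun u hu ↦ (hasDerivAt_const_div (c := c) (ne_of_gt hu)).hasDerivWithinAt)
    (antitoneOn_const_div_Ioi hc.le) g
  simpa only [image_const_div_Ioi hc, neg_neg] using h.symm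

lemma hasDerivAt_mul_sub_div {u : ℝ} (hu : u ≠ 0) :
    HasDerivAt (fun u ↦ a * u - b / u) (a + b / u ^ 2) u := by
  have h := ((hasDerivAt_id' u).const_mul a).fun_sub (hasDerivAt_const_div (c := b) hu)
  rwa [mul_one, sub_neg_eq_add] at h

lemma monotoneOn_mul_sub_div_Ioi (ha : 0 ≤ a) (hb : 0 ≤ b) :
    MonotoneOn (fun u ↦ a * u - b / u) (Ioi 0) := fun _ hu _ hv huv ↦
  sub_le_sub (mul_le_mul_of_nonneg_left huv ha) (antitoneOn_const_div_Ioi hb hu hv huv)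

lemma image_mul_sub_div_Ioi (ha : 0 < a) (hb : 0 < b) :
    (fun u ↦ a * u - b / u) '' Ioi 0 = univ := by
  refine eq_univ_of_forall fun y ↦ ?_
  set r := √(y ^ 2 + 4 * a * b)
  have hr_sq : r ^ 2 = y ^ 2 + 4 * a * b := Real.sq_sqrt (by positivity)
  have hr_gt : |y| < r := Real.lt_sqrt_of_sq_lt (by rw [sq_abs]; linarith [mul_pos ha hb])
  have hyr : 0 < y + r := by linarith [neg_abs_le y]
  refine ⟨(y + r) / (2 * a), div_pos hyr (by positivity), ?_⟩
  field_simp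
  linear_combination hr_sq

lemma integral_Ioi_deriv_smul_comp_mul_sub_div (ha : 0 < a) (hb : 0 < b) (g : ℝ → E) :
    ∫ u in Ioi 0, (a + b / u ^ 2) • g (a * u - b / u) = ∫ y, g y := by
  have h := integral_image_eq_integral_deriv_smul_of_monotoneOn measurableSet_Ioi
    (fun u hu ↦ (hasDerivAt_mul_sub_div (ne_of_gt hu)).hasDerivWithinAt)
    (monotoneOn_mul_sub_div_Ioi ha.le hb.le) g
  rw [← h, image_mul_sub_div_Ioi ha hb, setIntegral_univ]

lemma integrableOn_Ioi_deriv_smul_comp_mul_sub_div (ha : 0 < a) (hb : 0 < b) {g : ℝ → E}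
    (hg : Integrable g) :
    IntegrableOn (fun u ↦ (a + b / u ^ 2) • g (a * u - b / u)) (Ioi 0) := by
  rw [← integrableOn_image_iff_integrableOn_deriv_smul_of_monotoneOn measurableSet_Ioi
    (fun u hu ↦ (hasDerivAt_mul_sub_div (ne_of_gt hu)).hasDerivWithinAt)
    (monotoneOn_mul_sub_div_Ioi ha.le hb.le) g, image_mul_sub_div_Ioi ha hb]
  exact hg.integrableOn

lemma integrableOn_Ioi_comp_mul_sub_div (ha : 0 < a) (hb : 0 < b) {g : ℝ → E}
    (hg : Integrable g) : IntegrableOn (fun u ↦ g (a * u - b / u)) (Ioi 0) := by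
  have h_bound : ∀ u : ℝ, ‖(a + b / u ^ 2)⁻¹‖ ≤ a⁻¹ := fun u ↦ by
    rw [Real.norm_of_nonneg (by positivity)]
    exact inv_anti₀ ha (le_add_of_nonneg_right (by positivity))
  have h := (integrableOn_Ioi_deriv_smul_comp_mul_sub_div ha hb hg).bdd_smul a⁻¹
    (φ := fun u ↦ (a + b / u ^ 2)⁻¹) (Measurable.aestronglyMeasurable (by fun_prop))
    (ae_of_all _ h_bound)
  refine h.congr (ae_of_all _ fun u ↦ ?_)
  exact inv_smul_smul₀ (by positivity) _

/-- The inversion `u ↦ b / (a * u)` swaps the two halves of the weight `a + b / u ^ 2`. -/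
theorem integral_Ioi_comp_mul_sub_div_of_even (ha : 0 < a) (hb : 0 < b) {g : ℝ → E}
    (hg : Integrable g) (hg_even : g.Even) :
    ∫ u in Ioi 0, g (a * u - b / u) = (2 * a)⁻¹ • ∫ y, g y := by
  have h_swap : ∫ u in Ioi 0, (b / u ^ 2) • g (a * u - b / u) =
      a • ∫ u in Ioi 0, g (a * u - b / u) := by
    rw [← integral_Ioi_comp_const_div (div_pos hb ha), ← integral_smul]
    refine setIntegral_congr_fun measurableSet_Ioi fun u (hu : 0 < u) ↦ ?_
    have h_arg : a * (b / a / u) - b / (b / a / u) = -(a * u - b / u) := by field_simp; ring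
    simp only [h_arg, hg_even _, smul_smul]
    congr 1
    field_simp
  have h_int := integrableOn_Ioi_comp_mul_sub_div ha hb hg
  have h_int_div : IntegrableOn (fun u ↦ (b / u ^ 2) • g (a * u - b / u)) (Ioi 0) := by
    refine ((integrableOn_Ioi_deriv_smul_comp_mul_sub_div ha hb hg).sub (h_int.smul a)).congr
      (ae_of_all _ fun u ↦ ?_)
    simp only [Pi.sub_apply, Pi.smul_apply, add_smul, add_sub_cancel_left]
  rw [eq_inv_smul_iff₀ (by positivity)]
  calc (2 * a) • ∫ u in Ioi 0, g (a * u - b / u)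
      = (∫ u in Ioi 0, a • g (a * u - b / u)) + ∫ u in Ioi 0, (b / u ^ 2) • g (a * u - b / u) := by
        rw [h_swap, integral_smul, two_mul, add_smul]
    _ = ∫ u in Ioi 0, (a + b / u ^ 2) • g (a * u - b / u) := by
        simp only [add_smul]
        exact (integral_add (h_int.smul a) h_int_div).symm
    _ = ∫ y, g y := integral_Ioi_deriv_smul_comp_mul_sub_div ha hb g

end CauchySchlomilch

section Resolvent

theorem integral_Ioi_exp_neg_mul_sq_add_div_sq {p q : ℝ} (hp : 0 < p) (hq : 0 ≤ q) :
    ∫ u in Ioi (0 : ℝ), rexp (-(p * u ^ 2 + q / u ^ 2)) =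
      √(π / p) / 2 * rexp (-(2 * √(p * q))) := by
  rcases hq.eq_or_lt with rfl | hq
  · simpa using integral_gaussian_Ioi p
  have hsp : √p ^ 2 = p := Real.sq_sqrt hp.le
  have hsq : √q ^ 2 = q := Real.sq_sqrt hq.le
  have h_square : ∀ u ∈ Ioi (0 : ℝ), rexp (-(p * u ^ 2 + q / u ^ 2)) =
      rexp (-1 * (√p * u - √q / u) ^ 2) * rexp (-(2 * √(p * q))) := by
    intro u (hu : 0 < u)
    rw [← Real.exp_add, Real.sqrt_mul hp.le, ← hsp, ← hsq]
    congr 1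
    simp only [Real.sqrt_sq (Real.sqrt_nonneg _)]
    field_simp
    ring
  rw [setIntegral_congr_fun measurableSet_Ioi h_square, integral_mul_const,
    integral_Ioi_comp_mul_sub_div_of_even (g := fun y ↦ rexp (-1 * y ^ 2)) (by positivity)
      (by positivity) (integrable_exp_neg_mul_sq one_pos) fun y ↦ by simp only [neg_sq],
    integral_gaussian, div_one, Real.sqrt_div' _ hp.le, smul_eq_mul]
  field_simp

lemma gaussianPDFReal_toNNReal (m v x : ℝ) :
    gaussianPDFReal m v.toNNReal x = rexp (-(x - m) ^ 2 / (2 * v)) / √(2 * π * v) := by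
  -- For `v ≤ 0` both sides vanish: `v.toNNReal = 0`, and the denominator is `√(2 * π * v) = 0`.
  rcases le_total 0 v with hv | hv
  · rw [gaussianPDFReal, Real.coe_toNNReal v hv, inv_mul_eq_div]
  · have h : 2 * π * v ≤ 0 := mul_nonpos_of_nonneg_of_nonpos (by positivity) hv
    simp [Real.toNNReal_of_nonpos hv, Real.sqrt_eq_zero_of_nonpos h]

variable {η : ℝ}

theorem integral_Ioi_exp_neg_mul_mul_gaussianPDFReal (hη : 0 < η) (s : ℝ) :
    ∫ t in Ioi (0 : ℝ), rexp (-η * t) * gaussianPDFReal 0 t.toNNReal s =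
      (√(2 * η))⁻¹ * rexp (-√(2 * η) * |s|) := by
  have h_exponent : (2 : ℝ) - 1 = 1 := by norm_num
  have h_subst : ∀ u ∈ Ioi (0 : ℝ), ((2 : ℝ) * u ^ ((2 : ℝ) - 1)) •
      (rexp (-η * u ^ (2 : ℝ)) * gaussianPDFReal 0 (u ^ (2 : ℝ)).toNNReal s) =
      2 / √(2 * π) * rexp (-(η * u ^ 2 + s ^ 2 / 2 / u ^ 2)) := by
    intro u (hu : 0 < u)
    have h_sqrt : √(2 * π * u ^ 2) = √(2 * π) * u := by
      rw [Real.sqrt_mul (by positivity), Real.sqrt_sq hu.le]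
    rw [gaussianPDFReal_toNNReal, Real.rpow_two, h_sqrt, neg_add, Real.exp_add, smul_eq_mul,
      h_exponent, Real.rpow_one, sub_zero, neg_div, div_div, neg_mul]
    field_simp
  have h_sqrt_mul : 2 * √(η * (s ^ 2 / 2)) = √(2 * η) * |s| := by
    calc 2 * √(η * (s ^ 2 / 2))
        = √(2 ^ 2 * (η * (s ^ 2 / 2))) := by
          rw [Real.sqrt_mul (sq_nonneg 2), Real.sqrt_sq zero_le_two]
      _ = √(2 * η * s ^ 2) := by ring_nf
      _ = √(2 * η) * |s| := by rw [Real.sqrt_mul (by positivity), Real.sqrt_sq_eq_abs]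
  rw [← integral_comp_rpow_Ioi_of_pos two_pos, setIntegral_congr_fun measurableSet_Ioi h_subst,
    integral_const_mul, integral_Ioi_exp_neg_mul_sq_add_div_sq hη (by positivity), h_sqrt_mul,
    ← neg_mul, ← mul_assoc, Real.sqrt_div' _ hη.le, Real.sqrt_mul zero_le_two,
    Real.sqrt_mul zero_le_two]
  congr 1
  field_simp

lemma integrableOn_Ioi_exp_neg_mul_mul_gaussianPDFReal (hη : 0 < η) (s : ℝ) :
    IntegrableOn (fun t ↦ rexp (-η * t) * gaussianPDFReal 0 t.toNNReal s) (Ioi 0) :=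
  .of_integral_ne_zero <| by
    rw [integral_Ioi_exp_neg_mul_mul_gaussianPDFReal hη]
    positivity

end Resolvent

section Mixtures

theorem integral_integral_kernel_smul {X S 𝕜 E : Type*} [MeasurableSpace X] [MeasurableSpace S]
    [RCLike 𝕜] [NormedAddCommGroup E] [NormedSpace ℝ E] [NormedSpace 𝕜 E] [CompleteSpace E]
    {ρ : Measure X} {ν : Measure S} [SFinite ρ] [SFinite ν] {k : X → S → 𝕜} {f : S → E}
    (hk : AEStronglyMeasurable (uncurry k) (ρ.prod ν)) (hf : AEStronglyMeasurable f ν)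
    (hk_int : ∀ᵐ s ∂ν, Integrable (k · s) ρ)
    (hkf_int : Integrable (fun s ↦ (∫ x, ‖k x s‖ ∂ρ) • f s) ν) :
    ∫ x, ∫ s, k x s • f s ∂ν ∂ρ = ∫ s, (∫ x, k x s ∂ρ) • f s ∂ν := by
  have h_meas : AEStronglyMeasurable (uncurry fun x s ↦ k x s • f s) (ρ.prod ν) :=
    hk.smul hf.comp_snd
  rw [integral_integral_swap]
  · simp only [integral_smul_const]
  rw [integrable_prod_iff' h_meas]
  refine ⟨hk_int.mono fun s hs ↦ hs.smul_const (f s), hkf_int.norm.congr (ae_of_all _ fun s ↦ ?_)⟩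
  simp only [uncurry_apply_pair, norm_smul, integral_mul_const]
  rw [Real.norm_of_nonneg (integral_nonneg fun _ ↦ norm_nonneg _)]

lemma integral_cexp_mul_gaussianPDFReal (m β : ℝ) {v : ℝ≥0} (hv : v ≠ 0) :
    ∫ x : ℝ, cexp (I * β * x) * (gaussianPDFReal m v x : ℂ) =
      cexp (β * m * I - v * β ^ 2 / 2) := by
  rw [← charFun_gaussianReal, charFun_apply_real, integral_gaussianReal_eq_integral_smul hv]
  refine integral_congr_ae (ae_of_all _ fun x ↦ ?_)
  simp only [Complex.real_smul, mul_comm, mul_left_comm]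

theorem integral_cexp_mul_integral_gaussianPDFReal_mul {S : Type*} [MeasurableSpace S]
    {ν : Measure S} [SFinite ν] {m : S → ℝ} {v : S → ℝ≥0} {q : S → ℝ} (hm : Measurable m)
    (hv : Measurable v) (hv₀ : ∀ᵐ s ∂ν, v s ≠ 0) (hq : Integrable q ν) (β : ℝ) :
    ∫ x : ℝ, cexp (I * β * x) * (∫ s, gaussianPDFReal (m s) (v s) x * q s ∂ν : ℝ) =
      ∫ s, cexp (β * m s * I - v s * β ^ 2 / 2) * q s ∂ν := by
  have h_norm (x : ℝ) (s : S) : ‖cexp (I * β * x) * (gaussianPDFReal (m s) (v s) x : ℂ)‖ =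
      gaussianPDFReal (m s) (v s) x := by
    rw [norm_mul, Complex.norm_of_nonneg (gaussianPDFReal_nonneg _ _ _), Complex.norm_exp]
    simp
  have hq_ofReal : Integrable (fun s ↦ (q s : ℂ)) ν := hq.ofReal
  have h_int (s : S) :
      Integrable fun x : ℝ ↦ cexp (I * β * x) * (gaussianPDFReal (m s) (v s) x : ℂ) := by
    refine (integrable_gaussianPDFReal (m s) (v s)).mono' (by fun_prop) (ae_of_all _ fun x ↦ ?_)
    exact (h_norm x s).le
  calc ∫ x : ℝ, cexp (I * β * x) * (∫ s, gaussianPDFReal (m s) (v s) x * q s ∂ν : ℝ)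
      = ∫ x : ℝ, ∫ s, (cexp (I * β * x) * (gaussianPDFReal (m s) (v s) x : ℂ)) • (q s : ℂ) ∂ν := by
        simp only [← integral_complex_ofReal, Complex.ofReal_mul, ← integral_const_mul,
          smul_eq_mul, mul_assoc]
    _ = ∫ s, (∫ x : ℝ, cexp (I * β * x) * (gaussianPDFReal (m s) (v s) x : ℂ)) • (q s : ℂ) ∂ν := by
        refine integral_integral_kernel_smul (by unfold uncurry; fun_prop)
          hq_ofReal.aestronglyMeasurable (ae_of_all _ h_int) (hq_ofReal.congr ?_)
        filter_upwards [hv₀] with s hs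
        simp only [h_norm, integral_gaussianPDFReal_eq_one (m s) hs, one_smul]
    _ = ∫ s, cexp (β * m s * I - v s * β ^ 2 / 2) * q s ∂ν := by
        refine integral_congr_ae (hv₀.mono fun s hs ↦ ?_)
        simp only [integral_cexp_mul_gaussianPDFReal (m s) β hs, smul_eq_mul]

theorem integral_exp_smul_integral_gaussianPDFReal_smul {E : Type*} [NormedAddCommGroup E]
    [NormedSpace ℝ E] [CompleteSpace E] {ν : Measure ℝ} [SFinite ν] {η : ℝ} (hη : 0 < η)
    {f : ℝ → E} (hf : Integrable (fun s ↦ rexp (-√(2 * η) * |s|) • f s) ν) :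
    ∫ t in Ioi (0 : ℝ), rexp (-η * t) • ∫ s, gaussianPDFReal 0 t.toNNReal s • f s ∂ν =
      (√(2 * η))⁻¹ • ∫ s, rexp (-√(2 * η) * |s|) • f s ∂ν := by
  have hf_meas : AEStronglyMeasurable f ν := by
    have h_exp : AEStronglyMeasurable (fun s ↦ rexp (√(2 * η) * |s|)) ν := by fun_prop
    refine (h_exp.smul hf.aestronglyMeasurable).congr (ae_of_all _ fun s ↦ ?_)
    simp [smul_smul, ← Real.exp_add]
  simp only [← integral_smul, smul_smul, ← integral_Ioi_exp_neg_mul_mul_gaussianPDFReal hη]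
  refine integral_integral_kernel_smul (by unfold uncurry; fun_prop) hf_meas
    (ae_of_all _ <| integrableOn_Ioi_exp_neg_mul_mul_gaussianPDFReal hη) ?_
  refine (hf.smul (√(2 * η))⁻¹).congr (ae_of_all _ fun s ↦ ?_)
  have h_norm (t : ℝ) : ‖rexp (-η * t) * gaussianPDFReal 0 t.toNNReal s‖ =
      rexp (-η * t) * gaussianPDFReal 0 t.toNNReal s :=
    Real.norm_of_nonneg (mul_nonneg (Real.exp_nonneg _) (gaussianPDFReal_nonneg _ _ _))
  simp only [h_norm, integral_Ioi_exp_neg_mul_mul_gaussianPDFReal hη, smul_smul, Pi.smul_apply]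

end Mixtures

section ClosedForm

lemma exp_neg_mul_abs_smul_cexp {c s : ℝ} (hs : 0 ≤ s) (z : ℂ) :
    rexp (-c * |s|) • cexp (-z * s) = cexp (-(z + c) * s) := by
  rw [abs_of_nonneg hs, Complex.real_smul, Complex.ofReal_exp, ← Complex.exp_add]
  congr 1
  push_cast
  ring

lemma integrableOn_Ioi_exp_neg_mul_abs_smul_cexp {c : ℝ} {z : ℂ} (hz : -c < z.re) :
    IntegrableOn (fun s : ℝ ↦ rexp (-c * |s|) • cexp (-z * s)) (Ioi 0) :=
  (integrableOn_exp_mul_complex_Ioi (a := -(z + c)) (by simpa using hz) 0).congr_fun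
    (fun s hs ↦ (exp_neg_mul_abs_smul_cexp (le_of_lt hs) z).symm) measurableSet_Ioi

lemma integral_Ioi_exp_neg_mul_abs_smul_cexp {c : ℝ} {z : ℂ} (hz : -c < z.re) :
    ∫ s in Ioi (0 : ℝ), rexp (-c * |s|) • cexp (-z * s) = (z + c)⁻¹ := by
  rw [setIntegral_congr_fun measurableSet_Ioi fun s hs ↦ exp_neg_mul_abs_smul_cexp (le_of_lt hs) z,
    integral_exp_mul_complex_Ioi (by simpa using hz), Complex.ofReal_zero, mul_zero,
    Complex.exp_zero, neg_div_neg_eq, one_div]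

lemma two_mul_inv_sqrt_two_mul_smul_inv (η : ℝ) (z : ℂ) :
    2 * ((√(2 * η))⁻¹ • (z + √(2 * η))⁻¹) = (√η : ℂ)⁻¹ / (z / √2 + √η) := by
  have h_sq : (√2 : ℂ) ^ 2 = 2 := by exact_mod_cast Real.sq_sqrt zero_le_two
  have h_ne : (√2 : ℂ) ≠ 0 := by simp
  have h_denom : z + √(2 * η) = √2 * (z / √2 + √η) := by
    rw [Real.sqrt_mul zero_le_two, Complex.ofReal_mul, mul_add, mul_div_cancel₀ z h_ne]
  rw [h_denom, Real.sqrt_mul zero_le_two, Complex.real_smul, Complex.ofReal_inv,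
    Complex.ofReal_mul, mul_inv, mul_inv, div_eq_mul_inv]
  field_simp
  rw [h_sq]

lemma two_rpow_three_halves : (2 : ℝ) ^ ((3 : ℝ) / 2) = 2 * √2 := by
  rw [Real.sqrt_eq_rpow, ← Real.rpow_one_add' zero_le_two (by norm_num)]
  norm_num

end ClosedForm

section IteratedBrownianMotion

lemma iterBMDriftDensity_eq_integral_gaussianPDFReal (μ x t : ℝ) :
    iterBMDriftDensity μ x t = 2 * ∫ s in Ioi (0 : ℝ),
      gaussianPDFReal (μ * s) s.toNNReal x * gaussianPDFReal 0 t.toNNReal s := by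
  simp only [iterBMDriftDensity, gaussianPDFReal_toNNReal, sub_zero]

theorem integral_cexp_mul_iterBMDriftDensity (μ β t : ℝ) :
    ∫ x : ℝ, cexp (I * β * x) * (iterBMDriftDensity μ x t : ℂ) =
      2 * ∫ s in Ioi (0 : ℝ),
        gaussianPDFReal 0 t.toNNReal s • cexp (-(β ^ 2 / 2 - I * β * μ) * s) := by
  simp only [iterBMDriftDensity_eq_integral_gaussianPDFReal, Complex.ofReal_mul,
    Complex.ofReal_ofNat, mul_left_comm _ (2 : ℂ)]
  rw [integral_const_mul, integral_cexp_mul_integral_gaussianPDFReal_mul (by fun_prop)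
    (by fun_prop) ?_ (integrable_gaussianPDFReal 0 _).restrict]
  · congr 1
    refine setIntegral_congr_fun measurableSet_Ioi fun s (hs : 0 < s) ↦ ?_
    simp only [Real.coe_toNNReal s hs.le, Complex.real_smul]
    rw [mul_comm]
    congr 2
    push_cast
    ring
  · filter_upwards [self_mem_ae_restrict measurableSet_Ioi] with s hs
    exact (Real.toNNReal_pos.2 hs).ne'

end IteratedBrownianMotion

/-- The joint Laplace–Fourier transform of the density of the iterated Brownian motion
with drift equals `η^{−1/2} / (β²/2^{3/2} − iβμ/√2 + √η)`. -/
theorem iterBMDriftDensity_laplace_fourier (μ : ℝ) :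
    ∀ η β : ℝ, 0 < η →
      (∫ t in Set.Ioi (0 : ℝ), Complex.exp (-(η : ℂ) * t) *
          ∫ x : ℝ, Complex.exp (Complex.I * β * x) * (iterBMDriftDensity μ x t : ℂ))
        = ((Real.sqrt η)⁻¹ : ℂ) /
            ((β ^ 2 / (2 : ℝ) ^ ((3 : ℝ) / 2) : ℝ)
              - Complex.I * β * μ / (Real.sqrt 2 : ℂ) + (Real.sqrt η : ℂ)) := by
  intro η β hη
  set z : ℂ := β ^ 2 / 2 - I * β * μ with hz
  have hz_re : -√(2 * η) < z.re := by
    have : z.re = β ^ 2 / 2 := by simp [hz, ← Complex.ofReal_pow]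
    linarith [Real.sqrt_pos.2 (mul_pos two_pos hη), sq_nonneg β]
  calc ∫ t in Ioi (0 : ℝ), cexp (-(η : ℂ) * t) *
        ∫ x : ℝ, cexp (I * β * x) * (iterBMDriftDensity μ x t : ℂ)
      = 2 * ∫ t in Ioi (0 : ℝ), rexp (-η * t) •
          ∫ s in Ioi (0 : ℝ), gaussianPDFReal 0 t.toNNReal s • cexp (-z * s) := by
        simp only [integral_cexp_mul_iterBMDriftDensity, mul_left_comm _ (2 : ℂ),
          integral_const_mul, Complex.real_smul, Complex.ofReal_exp, Complex.ofReal_mul,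
          Complex.ofReal_neg, hz]
    _ = 2 * ((√(2 * η))⁻¹ • (z + √(2 * η))⁻¹) := by
        rw [integral_exp_smul_integral_gaussianPDFReal_smul hη
          (integrableOn_Ioi_exp_neg_mul_abs_smul_cexp hz_re),
          integral_Ioi_exp_neg_mul_abs_smul_cexp hz_re]
    _ = (√η : ℂ)⁻¹ / (z / √2 + √η) := two_mul_inv_sqrt_two_mul_smul_inv η z
    _ = _ := by
        rw [hz, sub_div, two_rpow_three_halves]
        push_cast
        rw [div_div]
end
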